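/- Let w, τ' ∈ S_n with ℓ(τ') ≤ ℓ(w). Then the polynomial obtained from ∂_{τ'}𝔖_w(x;y) (the Demazure operator ∂_{τ'} acting in the x-variables) by substituting y_i := x_i for all 1 ≤ i ≤ n equals 1 if τ' = w, and equals 0 otherwise. -/

import Mathlib

open MvPolynomial

noncomputable section

/-- `R n` is the polynomial ring `ℂ[x_1, …, x_n]`. -/
abbrev R (n : ℕ) := MvPolynomial (Fin n) ℂ

/-- The inversion set of a permutation. -/
def invSet (n : ℕ) (w : Equiv.Perm (Fin n)) : Finset (Fin n × Fin n) :=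
  Finset.univ.filter fun p => p.1 < p.2 ∧ w p.2 < w p.1

/-- The Coxeter length of a permutation, i.e. its number of inversions. -/
def len (n : ℕ) (w : Equiv.Perm (Fin n)) : ℕ := (invSet n w).card

/-- `Δ_w = ∏_{(i,j) ∈ inv(w)} (x_i - x_j)`. -/
def Δpoly (n : ℕ) (w : Equiv.Perm (Fin n)) : R n :=
  ∏ p ∈ invSet n w, (X p.1 - X p.2)

/-- The simple reflection `s_j = (j, j+1)` (1-based `j` corresponds to 0-based index here);
for out-of-range indices we use the identity. -/
def simpleRefl (n : ℕ) (j : ℕ) : Equiv.Perm (Fin n) :=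
  if hj : j + 1 < n then Equiv.swap ⟨j, Nat.lt_of_succ_lt hj⟩ ⟨j + 1, hj⟩ else 1

open Classical in
/-- The Demazure operator `∂_j = (id - s_j)/(x_j - x_{j+1})` on `R n`. -/
def demX (n : ℕ) (j : ℕ) (h : R n) : R n :=
  if hj : j + 1 < n then
    let a : Fin n := ⟨j, Nat.lt_of_succ_lt hj⟩
    let b : Fin n := ⟨j + 1, hj⟩
    if hd : (X a - X b : R n) ∣ (h - rename (Equiv.swap a b) h) then hd.choose else 0
  else 0

/-- Composite Demazure operator along a word `[a_1, …, a_k]`: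
`∂_{a_1} ∘ ⋯ ∘ ∂_{a_k}`. -/
def demWord (n : ℕ) (l : List ℕ) (h : R n) : R n := l.foldr (demX n) h

/-- `l` is a reduced word for `w`: `w = s_{a_1} ⋯ s_{a_k}` with `k = ℓ(w)`. -/
def IsReducedWord (n : ℕ) (w : Equiv.Perm (Fin n)) (l : List ℕ) : Prop :=
  (l.map (simpleRefl n)).prod = w ∧ l.length = len n w

open Classical in
/-- The Demazure operator `∂_w` of a permutation, computed from a (choice of) reduced word;
it is independent of this choice. -/
def dem (n : ℕ) (w : Equiv.Perm (Fin n)) : R n → R n :=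
  if h : ∃ l, IsReducedWord n w l then demWord n h.choose else id

/-- The longest element `w_0` of `S_n`. -/
def w₀ (n : ℕ) : Equiv.Perm (Fin n) := Fin.revPerm

/-- The staircase monomial `x_1^{n-1} x_2^{n-2} ⋯ x_{n-1}`. -/
def staircase (n : ℕ) : R n := ∏ i : Fin n, X i ^ (n - 1 - (i : ℕ))


/-- `R2 n` is the polynomial ring `ℂ[x_1, …, x_n, y_1, …, y_n]`, with the `x`-variables
indexed by `Sum.inl` and the `y`-variables indexed by `Sum.inr`. -/
abbrev R2 (n : ℕ) := MvPolynomial (Fin n ⊕ Fin n) ℂ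

open Classical in
/-- The Demazure operator `∂_j` acting on the `x`-variables of `ℂ[x, y]`. -/
def demX2 (n : ℕ) (j : ℕ) (h : R2 n) : R2 n :=
  if hj : j + 1 < n then
    let a : Fin n := ⟨j, Nat.lt_of_succ_lt hj⟩
    let b : Fin n := ⟨j + 1, hj⟩
    if hd : (X (Sum.inl a) - X (Sum.inl b) : R2 n) ∣
        (h - rename (Equiv.sumCongr (Equiv.swap a b) (Equiv.refl (Fin n))) h) then
      hd.choose
    else 0
  else 0

/-- Composite Demazure operator (in the `x`-variables) along a word. -/
def demWord2 (n : ℕ) (l : List ℕ) (h : R2 n) : R2 n := l.foldr (demX2 n) h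

open Classical in
/-- The Demazure operator `∂_w` acting on the `x`-variables of `ℂ[x, y]`, computed from a
(choice of) reduced word for `w`; it is independent of this choice. -/
def dem2 (n : ℕ) (w : Equiv.Perm (Fin n)) : R2 n → R2 n :=
  if h : ∃ l, IsReducedWord n w l then demWord2 n h.choose else id

open Classical in
/-- `Δ(x; y) = ∏_{i + j ≤ n} (x_i - y_j)` (with `1`-based indices `i, j`). -/
def Δxy (n : ℕ) : R2 n :=
  ∏ p ∈ Finset.univ.filter (fun p : Fin n × Fin n => (p.1 : ℕ) + (p.2 : ℕ) + 2 ≤ n),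
    (X (Sum.inl p.1) - X (Sum.inr p.2))

/-- The double Schubert polynomial `𝔖_w(x; y) = ∂_{w⁻¹ w₀} Δ(x; y)`, with the Demazure
operators acting on the `x`-variables only. -/
def doubleSchubert (n : ℕ) (w : Equiv.Perm (Fin n)) : R2 n := dem2 n (w⁻¹ * w₀ n) (Δxy n)

/-!
For `u ∈ S_n` let `ev_u` be the evaluation `x_i ↦ x_{u⁻¹(i)}`, `y_i ↦ x_i`; the substitution
`y_i := x_i` is `ev_1`. Since `ev_u ∘ s_j = ev_{s_j u}`, the definition of `∂_j` becomes the
recursion `(x_{u⁻¹(j)} - x_{u⁻¹(j+1)}) ev_u(∂_j h) = ev_u(h) - ev_{s_j u}(h)`. Moreover `Δ(x; y)` is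
killed by every `ev_u` except `ev_{w₀}`, which sends it to `(-1)^ℓ(w₀) Δ_{w₀}`. By induction on `k`,
`ev_u(∂_{a_1} ⋯ ∂_{a_k} Δ(x; y))` is `(-1)^ℓ(u) Δ_u` if `s_{a_1} ⋯ s_{a_k} = u w₀`, and `0`
otherwise, as long as `k + ℓ(u) ≤ ℓ(w₀)`: under this bound a word of length `k - 1` is too short
to spell `u w₀`, so only the term `ev_{s_j u}` of the recursion survives, and it contributes only if
`ℓ(s_j u) = ℓ(u) + 1`, where `Δ_{s_j u}` is `Δ_u` times the linear factor to be divided out.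
Take `u = 1` and the concatenation of reduced words of `τ'` and `w⁻¹ w₀`: its length is
`ℓ(τ') + ℓ(w₀) - ℓ(w) ≤ ℓ(w₀)`, and it spells `w₀` exactly when `τ' = w`.
-/

section General

theorem perm_eq_one_of_forall_le {α : Type*} [PartialOrder α] [Finite α] (σ : Equiv.Perm α)
    (h : ∀ i, i ≤ σ i) : σ = 1 := by
  ext i
  -- Iterating `i ≤ σ i` along the cycle of `i` leads from `σ i` back to `i`.
  have hle : σ i ≤ (σ ^ (orderOf σ - 1)) (σ i) := by
    rw [Equiv.Perm.coe_pow]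
    exact Function.id_le_iterate_of_id_le h _ _
  rw [← Equiv.Perm.mul_apply, ← pow_succ, Nat.sub_add_cancel (orderOf_pos σ),
    pow_orderOf_eq_one] at hle
  exact hle.antisymm (h i)

theorem exists_covBy_apply_lt_of_ne_one {α : Type*} [LinearOrder α] [LocallyFiniteOrder α]
    [Finite α] {σ : Equiv.Perm α} (hσ : σ ≠ 1) : ∃ a b, a ⋖ b ∧ σ b < σ a := by
  contrapose! hσ
  have hmono : StrictMono σ :=
    ((monotone_iff_forall_covBy σ).2 hσ).strictMono_of_injective σ.injective
  exact perm_eq_one_of_forall_le σ fun _ ↦ hmono.le_apply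

theorem swap_lt_swap_iff_of_covBy {α : Type*} [LinearOrder α] {a b i j : α} (hab : a ⋖ b)
    (h : ¬(i = a ∧ j = b)) (h' : ¬(i = b ∧ j = a)) :
    Equiv.swap a b i < Equiv.swap a b j ↔ i < j := by
  have lt_b_iff (c : α) : c < b ↔ c ≤ a := hab.lt_iff_le_left
  have a_lt_iff (c : α) : a < c ↔ b ≤ c := hab.lt_iff_le_right
  grind

theorem dvd_aeval_sub_aeval {σ A B : Type*} [CommRing A] [CommRing B] [Algebra A B]
    {f g : σ → B} {d : B} (h : ∀ i, d ∣ f i - g i) (p : MvPolynomial σ A) :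
    d ∣ aeval f p - aeval g p := by
  simp only [← Ideal.mem_span_singleton, ← Ideal.Quotient.mk_eq_mk_iff_sub_mem] at h ⊢
  have hfg : (Ideal.Quotient.mkₐ A (Ideal.span {d})).comp (aeval f) =
      (Ideal.Quotient.mkₐ A (Ideal.span {d})).comp (aeval g) := by
    ext i
    simpa using h i
  exact DFunLike.congr_fun hfg p

theorem X_sub_X_dvd_sub_rename_swap {σ A : Type*} [DecidableEq σ] [CommRing A] (a b : σ)
    (p : MvPolynomial σ A) : X a - X b ∣ p - rename (Equiv.swap a b) p := by
  have h : ∀ i, (X a - X b : MvPolynomial σ A) ∣ X i - X (Equiv.swap a b i) := by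
    intro i
    rcases eq_or_ne i a with rfl | hia
    · simp
    rcases eq_or_ne i b with rfl | hib
    · rw [Equiv.swap_apply_right, dvd_sub_comm]
    · simp [Equiv.swap_apply_of_ne_of_ne hia hib]
  rw [← aeval_X_left_apply (rename _ p), aeval_rename]
  simpa only [aeval_X_left_apply] using dvd_aeval_sub_aeval (g := X ∘ Equiv.swap a b) h p

end General

section Inversions

variable {n : ℕ}

theorem mem_invSet {u : Equiv.Perm (Fin n)} {p : Fin n × Fin n} :
    p ∈ invSet n u ↔ p.1 < p.2 ∧ u p.2 < u p.1 := by
  simp [invSet]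

theorem invSet_one : invSet n 1 = ∅ := by
  ext p
  simpa [mem_invSet] using le_of_lt

theorem len_one : len n 1 = 0 := by
  rw [len, invSet_one, Finset.card_empty]

theorem len_inv (u : Equiv.Perm (Fin n)) : len n u⁻¹ = len n u :=
  Finset.card_nbij' (fun p ↦ (u⁻¹ p.2, u⁻¹ p.1)) (fun p ↦ (u p.2, u p.1))
    (by simp [Set.MapsTo, mem_invSet, and_comm]) (by simp [Set.MapsTo, mem_invSet, and_comm])
    (by simp [Set.LeftInvOn]) (by simp [Set.LeftInvOn, Set.RightInvOn])

theorem invSet_w₀ : invSet n (w₀ n) = Finset.univ.filter fun p ↦ p.1 < p.2 := by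
  ext p
  simp [mem_invSet, w₀]

theorem w₀_inv : (w₀ n)⁻¹ = w₀ n := rfl

theorem len_w₀_mul_add_len (u : Equiv.Perm (Fin n)) :
    len n (w₀ n * u) + len n u = len n (w₀ n) := by
  have hcompl : invSet n (w₀ n * u) = (invSet n (w₀ n)).filter fun p ↦ ¬u p.2 < u p.1 := by
    ext p
    rw [invSet_w₀, Finset.filter_filter, Finset.mem_filter_univ, mem_invSet]
    refine and_congr_right fun h ↦ ?_
    simp [w₀, (u.injective.ne h.ne).le_iff_lt]
  have hinv : invSet n u = (invSet n (w₀ n)).filter fun p ↦ u p.2 < u p.1 := by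
    rw [invSet_w₀, Finset.filter_filter, invSet]
  rw [len, len, hcompl, hinv, add_comm, Finset.card_filter_add_card_filter_not, len]

theorem len_mul_w₀_add_len (u : Equiv.Perm (Fin n)) :
    len n (u * w₀ n) + len n u = len n (w₀ n) := by
  rw [← len_inv (u * w₀ n), ← len_inv u, mul_inv_rev, w₀_inv, len_w₀_mul_add_len]

theorem invSet_swap_mul_of_lt {u : Equiv.Perm (Fin n)} {a b : Fin n} (hab : a ⋖ b)
    (hu : u⁻¹ a < u⁻¹ b) :
    invSet n (Equiv.swap a b * u) = insert (u⁻¹ a, u⁻¹ b) (invSet n u) := by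
  ext ⟨i, j⟩
  simp only [Finset.mem_insert, mem_invSet, Equiv.Perm.mul_apply, Prod.mk.injEq,
    Equiv.Perm.eq_inv_iff_eq]
  by_cases h : u i = a ∧ u j = b
  · obtain ⟨rfl, rfl⟩ := h
    simpa [hab.lt] using hu
  by_cases h' : u i = b ∧ u j = a
  · obtain ⟨rfl, rfl⟩ := h'
    have hji : j < i := by simpa using hu
    simp [hji.not_gt, hab.ne']
  rw [swap_lt_swap_iff_of_covBy hab (by tauto) (by tauto), or_iff_right h]

theorem notMem_invSet_of_lt {u : Equiv.Perm (Fin n)} {a b : Fin n} (hab : a < b) :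
    (u⁻¹ a, u⁻¹ b) ∉ invSet n u := by
  simp [mem_invSet, hab.le]

theorem len_swap_mul_of_lt {u : Equiv.Perm (Fin n)} {a b : Fin n} (hab : a ⋖ b)
    (hu : u⁻¹ a < u⁻¹ b) : len n (Equiv.swap a b * u) = len n u + 1 := by
  rw [len, invSet_swap_mul_of_lt hab hu,
    Finset.card_insert_of_notMem (notMem_invSet_of_lt hab.lt), len]

theorem len_swap_mul_add_one_of_gt {u : Equiv.Perm (Fin n)} {a b : Fin n} (hab : a ⋖ b)
    (hu : u⁻¹ b < u⁻¹ a) : len n (Equiv.swap a b * u) + 1 = len n u := by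
  rw [← len_swap_mul_of_lt hab (by simpa using hu), Equiv.swap_mul_self_mul]

theorem Δpoly_swap_mul_of_lt {u : Equiv.Perm (Fin n)} {a b : Fin n} (hab : a ⋖ b)
    (hu : u⁻¹ a < u⁻¹ b) :
    Δpoly n (Equiv.swap a b * u) = (X (u⁻¹ a) - X (u⁻¹ b)) * Δpoly n u := by
  rw [Δpoly, invSet_swap_mul_of_lt hab hu, Finset.prod_insert (notMem_invSet_of_lt hab.lt), Δpoly]

end Inversions

section ReducedWords

theorem exists_covBy_val_eq_or_le (n j : ℕ) :
    (∃ a b : Fin n, a ⋖ b ∧ (a : ℕ) = j) ∨ n ≤ j + 1 := by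
  by_cases hj : j + 1 < n
  · exact .inl ⟨⟨j, by omega⟩, ⟨j + 1, hj⟩, by simp, rfl⟩
  · exact .inr (not_lt.1 hj)

variable {n : ℕ}

theorem simpleRefl_of_covBy {a b : Fin n} (hab : a ⋖ b) : simpleRefl n a = Equiv.swap a b := by
  have hb : (a : ℕ) + 1 = b := by simpa using hab
  simp only [simpleRefl, hb, b.isLt, ↓reduceDIte, Fin.eta]

theorem simpleRefl_of_le {j : ℕ} (hj : n ≤ j + 1) : simpleRefl n j = 1 :=
  dif_neg hj.not_gt

theorem len_simpleRefl_mul_le (j : ℕ) (u : Equiv.Perm (Fin n)) :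
    len n (simpleRefl n j * u) ≤ len n u + 1 := by
  obtain ⟨a, b, hab, rfl⟩ | hj := exists_covBy_val_eq_or_le n j
  · rw [simpleRefl_of_covBy hab]
    rcases (u⁻¹.injective.ne hab.ne).lt_or_gt with h | h
    · exact (len_swap_mul_of_lt hab h).le
    · have hlen := len_swap_mul_add_one_of_gt hab h
      omega
  · simp [simpleRefl_of_le hj]

theorem len_prod_simpleRefl_le (l : List ℕ) : len n (l.map (simpleRefl n)).prod ≤ l.length := by
  induction l with
  | nil => simp [len_one]
  | cons j l ih =>
    rw [List.map_cons, List.prod_cons, List.length_cons]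
    exact (len_simpleRefl_mul_le j _).trans (by omega)

theorem exists_isReducedWord (w : Equiv.Perm (Fin n)) : ∃ l, IsReducedWord n w l := by
  induction hk : len n w using Nat.strong_induction_on generalizing w with
  | _ k ih =>
    by_cases hw : w = 1
    · exact ⟨[], by simp [hw], by simp [hw, len_one]⟩
    · obtain ⟨a, b, hab, hlt⟩ := exists_covBy_apply_lt_of_ne_one (inv_ne_one.2 hw)
      have hlen := len_swap_mul_add_one_of_gt hab hlt
      obtain ⟨l, hprod, hl⟩ := ih _ (by omega) (Equiv.swap a b * w) rfl
      refine ⟨a :: l, ?_, ?_⟩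
      · rw [List.map_cons, List.prod_cons, hprod, simpleRefl_of_covBy hab,
          Equiv.swap_mul_self_mul]
      · rw [List.length_cons, hl, hlen]

theorem exists_isReducedWord_dem2_eq (w : Equiv.Perm (Fin n)) :
    ∃ l, IsReducedWord n w l ∧ dem2 n w = demWord2 n l := by
  have h := exists_isReducedWord w
  exact ⟨h.choose, h.choose_spec, dif_pos h⟩

theorem prod_simpleRefl_ne_mul_w₀ {l : List ℕ} {u : Equiv.Perm (Fin n)}
    (h : l.length + len n u < len n (w₀ n)) : (l.map (simpleRefl n)).prod ≠ u * w₀ n := by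
  intro hprod
  have hle := len_prod_simpleRefl_le (n := n) l
  have hlen := len_mul_w₀_add_len u
  rw [hprod] at hle
  omega

end ReducedWords

section Localization

variable {n : ℕ}

theorem X_sub_X_mul_demX2 {a b : Fin n} (hab : a ⋖ b) (h : R2 n) :
    (X (Sum.inl a) - X (Sum.inl b)) * demX2 n a h =
      h - rename (Equiv.sumCongr (Equiv.swap a b) (Equiv.refl (Fin n))) h := by
  have hb : (a : ℕ) + 1 = b := by simpa using hab
  have hdvd := X_sub_X_dvd_sub_rename_swap (Sum.inl a) (Sum.inl b) h
  rw [← Equiv.Perm.sumCongr_swap_refl] at hdvd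
  simp only [demX2, hb, b.isLt, ↓reduceDIte, Fin.eta, hdvd]
  exact hdvd.choose_spec.symm

theorem demX2_of_le {j : ℕ} (hj : n ≤ j + 1) (h : R2 n) : demX2 n j h = 0 :=
  dif_neg hj.not_gt

/-- The evaluation `x_i ↦ x_{u⁻¹(i)}`, `y_i ↦ x_i`, i.e. the localization at the torus-fixed point
`u` of the flag variety. With `u⁻¹` rather than `u`, applying `s_j` to the `x`-variables amounts to
multiplying `u` by `s_j` on the left, and the inversions of `u` itself appear in the values. -/
def fixedPointEval (u : Equiv.Perm (Fin n)) : R2 n →ₐ[ℂ] R n :=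
  aeval (Sum.elim (fun i ↦ X (u⁻¹ i)) X)

theorem fixedPointEval_rename (u s : Equiv.Perm (Fin n)) (h : R2 n) :
    fixedPointEval u (rename (Equiv.sumCongr s (Equiv.refl (Fin n))) h) =
      fixedPointEval (s⁻¹ * u) h := by
  rw [fixedPointEval, aeval_rename, fixedPointEval]
  congr 2
  ext1 (i | i) <;> simp

theorem X_sub_X_mul_fixedPointEval_demX2 {a b : Fin n} (hab : a ⋖ b) (u : Equiv.Perm (Fin n))
    (h : R2 n) :
    (X (u⁻¹ a) - X (u⁻¹ b)) * fixedPointEval u (demX2 n a h) =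
      fixedPointEval u h - fixedPointEval (Equiv.swap a b * u) h := by
  have hX : fixedPointEval u (X (Sum.inl a) - X (Sum.inl b)) = X (u⁻¹ a) - X (u⁻¹ b) := by
    simp [fixedPointEval]
  rw [← hX, ← map_mul, X_sub_X_mul_demX2 hab, map_sub, fixedPointEval_rename, Equiv.swap_inv]

theorem fixedPointEval_w₀_Δxy :
    fixedPointEval (w₀ n) (Δxy n) = (-1) ^ len n (w₀ n) * Δpoly n (w₀ n) := by
  rw [Δpoly, len, ← Finset.prod_const, ← Finset.prod_mul_distrib, Δxy, map_prod, invSet_w₀]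
  refine Finset.prod_nbij' (fun p ↦ (p.2, Fin.rev p.1)) (fun p ↦ (Fin.rev p.2, p.1)) ?_ ?_ ?_ ?_ ?_
  · intro p
    simp only [Finset.mem_filter_univ, Fin.lt_def, Fin.val_rev]
    omega
  · intro p
    simp only [Finset.mem_filter_univ, Fin.lt_def, Fin.val_rev]
    omega
  · simp
  · simp
  · simp [fixedPointEval, w₀]

theorem fixedPointEval_Δxy_of_ne {u : Equiv.Perm (Fin n)} (hu : u ≠ w₀ n) :
    fixedPointEval u (Δxy n) = 0 := by
  obtain ⟨i, hi⟩ : ∃ i, u⁻¹ i < w₀ n i := by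
    contrapose! hu
    have hone : u⁻¹ * w₀ n = 1 :=
      perm_eq_one_of_forall_le _ fun i ↦ by simpa [w₀] using hu (w₀ n i)
    exact inv_mul_eq_one.1 hone
  rw [Δxy, map_prod]
  refine Finset.prod_eq_zero (i := (i, u⁻¹ i)) ?_ ?_
  · simp only [w₀, Fin.revPerm_apply, Fin.lt_def, Fin.val_rev] at hi
    simp only [Finset.mem_filter_univ]
    omega
  · simp [fixedPointEval]

theorem fixedPointEval_Δxy (u : Equiv.Perm (Fin n)) :
    fixedPointEval u (Δxy n) = if u = w₀ n then (-1) ^ len n u * Δpoly n u else 0 := by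
  split_ifs with hu
  · rw [hu, fixedPointEval_w₀_Δxy]
  · exact fixedPointEval_Δxy_of_ne hu

theorem fixedPointEval_demWord2_Δxy (l : List ℕ) (u : Equiv.Perm (Fin n))
    (hl : l.length + len n u ≤ len n (w₀ n)) :
    fixedPointEval u (demWord2 n l (Δxy n)) =
      if (l.map (simpleRefl n)).prod = u * w₀ n then (-1) ^ len n u * Δpoly n u else 0 := by
  induction l generalizing u with
  | nil =>
    change fixedPointEval u (Δxy n) = _
    have hiff : ([].map (simpleRefl n)).prod = u * w₀ n ↔ u = w₀ n := by
      rw [List.map_nil, List.prod_nil, eq_comm, mul_eq_one_iff_eq_inv, w₀_inv]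
    simp only [hiff, fixedPointEval_Δxy]
  | cons j l ih =>
    rw [List.length_cons] at hl
    have hzero (v) (hv : l.length + len n v < len n (w₀ n)) :
        fixedPointEval v (demWord2 n l (Δxy n)) = 0 := by
      rw [ih v hv.le, if_neg (prod_simpleRefl_ne_mul_w₀ hv)]
    change fixedPointEval u (demX2 n j (demWord2 n l (Δxy n))) = _
    rw [List.map_cons, List.prod_cons]
    obtain ⟨a, b, hab, rfl⟩ | hj := exists_covBy_val_eq_or_le n j
    · have hne : u⁻¹ a ≠ u⁻¹ b := u⁻¹.injective.ne hab.ne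
      have hX : (X (u⁻¹ a) - X (u⁻¹ b) : R n) ≠ 0 := sub_ne_zero.2 (X_injective.ne hne)
      have hiff : simpleRefl n a * (l.map (simpleRefl n)).prod = u * w₀ n ↔
          (l.map (simpleRefl n)).prod = Equiv.swap a b * u * w₀ n := by
        rw [simpleRefl_of_covBy hab, ← eq_inv_mul_iff_mul_eq, Equiv.swap_inv, mul_assoc]
      simp only [hiff]
      apply mul_left_cancel₀ hX
      rw [X_sub_X_mul_fixedPointEval_demX2 hab, hzero u (by omega), zero_sub]
      rcases hne.lt_or_gt with hlt | hgt
      · have hlen := len_swap_mul_of_lt hab hlt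
        rw [ih _ (by omega), hlen, Δpoly_swap_mul_of_lt hab hlt]
        split_ifs <;> ring
      · have hlen := len_swap_mul_add_one_of_gt hab hgt
        rw [hzero _ (by omega), if_neg (prod_simpleRefl_ne_mul_w₀ (by omega)), neg_zero, mul_zero]
    · rw [demX2_of_le hj, map_zero, simpleRefl_of_le hj, one_mul,
        if_neg (prod_simpleRefl_ne_mul_w₀ (by omega))]

theorem aeval_demWord2_Δxy (l : List ℕ) (hl : l.length ≤ len n (w₀ n)) :
    aeval (Sum.elim X X) (demWord2 n l (Δxy n)) =
      (if (l.map (simpleRefl n)).prod = w₀ n then 1 else 0 : R n) := by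
  have hone : aeval (Sum.elim X X) = fixedPointEval (1 : Equiv.Perm (Fin n)) := rfl
  rw [hone, fixedPointEval_demWord2_Δxy l 1 (by rwa [len_one])]
  simp only [len_one, pow_zero, one_mul, Δpoly, invSet_one, Finset.prod_empty]

end Localization

/-- For `τ', w ∈ S_n` with `ℓ(τ') ≤ ℓ(w)`, the polynomial obtained from
`∂_{τ'} 𝔖_w(x; y)` (Demazure operator in the `x`-variables) by substituting `y_i := x_i`
equals `1` if `τ' = w` and `0` otherwise. -/
theorem statement1 (n : ℕ) (w τ' : Equiv.Perm (Fin n)) (hl : len n τ' ≤ len n w) :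
    aeval (Sum.elim X X) (dem2 n τ' (doubleSchubert n w)) =
      (if τ' = w then 1 else 0 : R n) := by
  obtain ⟨l₁, ⟨hprod₁, hlen₁⟩, hdem₁⟩ := exists_isReducedWord_dem2_eq τ'
  obtain ⟨l₂, ⟨hprod₂, hlen₂⟩, hdem₂⟩ := exists_isReducedWord_dem2_eq (w⁻¹ * w₀ n)
  have hdem : dem2 n τ' (doubleSchubert n w) = demWord2 n (l₁ ++ l₂) (Δxy n) := by
    rw [doubleSchubert, hdem₁, hdem₂, demWord2, demWord2, demWord2, List.foldr_append]
  have hlen : (l₁ ++ l₂).length ≤ len n (w₀ n) := by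
    have hw := len_mul_w₀_add_len w⁻¹
    rw [len_inv] at hw
    rw [List.length_append, hlen₁, hlen₂]
    omega
  have hprod : ((l₁ ++ l₂).map (simpleRefl n)).prod = w₀ n ↔ τ' = w := by
    rw [List.map_append, List.prod_append, hprod₁, hprod₂, ← mul_assoc, mul_eq_right,
      mul_inv_eq_one]
  simp only [hdem, aeval_demWord2_Δxy _ hlen, hprod]
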